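/- arXiv:0806.4717 — 2 statements merged into one kernel-verified Lean document; each statement's English description precedes it below -/
import Mathlib

section
/- In a monoid M with elements τ₁,…,τ_{p-1} satisfying τᵢ² = 1 for all i and τᵢτⱼ = τⱼτᵢ whenever |i-j| > 1, the element γ = (τ₁τ₂⋯τ_{p-1})(τ₁τ₂⋯τ_{p-2})⋯(τ₁τ₂)(τ₁) satisfies γ² = 1. -/
/-!
Write `Aₙ` for the ascending product of the first `n` generators, `Dₙ` for the descending one and
`γₙ = Aₙ Aₙ₋₁ ⋯ A₁`. By definition `γₙ₊₁ = Aₙ₊₁ γₙ`. As the last generator in `Aₙ₊₁` commutes with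
`γₙ₋₁`, it can be moved to the right in `γₙ₊₁`, which gives `γₙ₊₁ = γₙ Dₙ₊₁` by induction. When the
generators are involutions, `Dₙ₊₁ Aₙ₊₁ = 1`, and so `γₙ₊₁² = (γₙ Dₙ₊₁) (Aₙ₊₁ γₙ) = γₙ²`. The same
computation works for two sequences with `σᵢ τᵢ = 1`: it shows `γₙ(σ) γₙ(τ) = 1`.
-/

section Evacuation

variable {M : Type*} [Monoid M]

/-- The ascending product `τ₀ τ₁ ⋯ τₙ₋₁` (the promotion operator). Indices start at `0`,
so the generator `τᵢ` of the usual notation is `τ (i - 1)` here. -/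
def ascendingProd (τ : ℕ → M) (n : ℕ) : M := ((List.range n).map τ).prod

/-- The descending product `τₙ₋₁ ⋯ τ₁ τ₀`, inverse to `ascendingProd τ n` when the generators are
involutions. -/
def descendingProd (τ : ℕ → M) (n : ℕ) : M := ((List.range n).reverse.map τ).prod

/-- The evacuation operator `(τ₀ ⋯ τₙ₋₁)(τ₀ ⋯ τₙ₋₂) ⋯ (τ₀ τ₁)(τ₀)`, whose factors are the nonempty
ascending products, longest first. -/
def evacuation (τ : ℕ → M) (n : ℕ) : M :=
  ((List.range n).reverse.map fun k => ascendingProd τ (k + 1)).prod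

section Recursion

variable (τ : ℕ → M)

@[simp] theorem ascendingProd_zero : ascendingProd τ 0 = 1 := rfl

@[simp] theorem descendingProd_zero : descendingProd τ 0 = 1 := rfl

@[simp] theorem evacuation_zero : evacuation τ 0 = 1 := rfl

theorem ascendingProd_succ (n : ℕ) : ascendingProd τ (n + 1) = ascendingProd τ n * τ n :=
  List.prod_range_succ τ n

theorem descendingProd_succ (n : ℕ) : descendingProd τ (n + 1) = τ n * descendingProd τ n := by
  simp [descendingProd, List.range_succ]

theorem evacuation_succ (n : ℕ) :
    evacuation τ (n + 1) = ascendingProd τ (n + 1) * evacuation τ n := by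
  simp [evacuation, List.range_succ]

theorem evacuation_comp_one_add (n : ℕ) :
    evacuation (fun i => τ (1 + i)) n =
      ((List.range n).reverse.map fun k => ((List.range' 1 (k + 1)).map τ).prod).prod := by
  simp only [evacuation, ascendingProd, List.range'_eq_map_range, List.map_map, Function.comp_def]

end Recursion

variable {σ τ : ℕ → M} {n : ℕ}

theorem descendingProd_mul_ascendingProd (hinv : ∀ i < n, σ i * τ i = 1) :
    descendingProd σ n * ascendingProd τ n = 1 := by
  induction n with
  | zero => simp
  | succ n ih =>
    calc descendingProd σ (n + 1) * ascendingProd τ (n + 1)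
        = σ n * (descendingProd σ n * ascendingProd τ n) * τ n := by
          simp only [descendingProd_succ, ascendingProd_succ, mul_assoc]
      _ = σ n * τ n := by rw [ih fun i hi => hinv i (by lia), mul_one]
      _ = 1 := hinv n n.lt_succ_self

theorem commute_ascendingProd {x : M} (h : ∀ i < n, Commute x (τ i)) :
    Commute x (ascendingProd τ n) :=
  Commute.list_prod_right _ _ <| by simpa using h

theorem commute_evacuation {x : M} (h : ∀ i < n, Commute x (τ i)) :
    Commute x (evacuation τ n) := by
  have commute_factor : ∀ k < n, Commute x (ascendingProd τ (k + 1)) := fun k hk =>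
    commute_ascendingProd fun i hi => h i (by lia)
  exact Commute.list_prod_right _ _ <| by simpa using commute_factor

theorem evacuation_succ_eq_mul_descendingProd
    (hcomm : ∀ i j, i + 1 < j → j ≤ n → Commute (τ i) (τ j)) :
    evacuation τ (n + 1) = evacuation τ n * descendingProd τ (n + 1) := by
  induction n with
  | zero => simp [evacuation_succ, ascendingProd_succ, descendingProd_succ]
  | succ n ih =>
    have last_commute : Commute (τ (n + 1)) (evacuation τ n) :=
      commute_evacuation fun i hi => (hcomm i (n + 1) (by lia) le_rfl).symm
    calc evacuation τ (n + 2)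
        = ascendingProd τ (n + 1) * τ (n + 1) * evacuation τ (n + 1) := by
          rw [evacuation_succ, ascendingProd_succ]
      _ = ascendingProd τ (n + 1) * τ (n + 1) * (evacuation τ n * descendingProd τ (n + 1)) := by
          rw [ih fun i j hij hj => hcomm i j hij (by lia)]
      _ = ascendingProd τ (n + 1) * (τ (n + 1) * evacuation τ n) * descendingProd τ (n + 1) := by
          simp only [mul_assoc]
      _ = ascendingProd τ (n + 1) * (evacuation τ n * τ (n + 1)) * descendingProd τ (n + 1) := by
          rw [last_commute.eq]
      _ = evacuation τ (n + 1) * descendingProd τ (n + 2) := by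
          simp only [evacuation_succ, descendingProd_succ τ (n + 1), mul_assoc]

theorem stmt0_general (hinv : ∀ i < n, σ i * τ i = 1)
    (hcomm : ∀ i j, i + 1 < j → j < n → Commute (σ i) (σ j)) :
    evacuation σ n * evacuation τ n = 1 := by
  induction n with
  | zero => simp
  | succ n ih =>
    calc evacuation σ (n + 1) * evacuation τ (n + 1)
        = evacuation σ n * descendingProd σ (n + 1) *
            (ascendingProd τ (n + 1) * evacuation τ n) := by
          rw [evacuation_succ_eq_mul_descendingProd fun i j hij hj => hcomm i j hij (by lia),
            evacuation_succ τ]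
      _ = evacuation σ n * (descendingProd σ (n + 1) * ascendingProd τ (n + 1)) *
            evacuation τ n := by
          simp only [mul_assoc]
      _ = evacuation σ n * evacuation τ n := by
          rw [descendingProd_mul_ascendingProd hinv, mul_one]
      _ = 1 := ih (fun i hi => hinv i (by lia)) fun i j hij hj => hcomm i j hij (by lia)

end Evacuation

/-- In a monoid `M` with elements `τ₁, …, τ_{p-1}` satisfying `τᵢ² = 1`
and `τᵢτⱼ = τⱼτᵢ` when `|i - j| > 1`, the element
`γ = (τ₁⋯τ_{p-1})(τ₁⋯τ_{p-2})⋯(τ₁τ₂)(τ₁)` satisfies `γ² = 1`. -/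
theorem stmt0 {M : Type*} [Monoid M] (p : ℕ) (hp : 2 ≤ p) (τ : ℕ → M)
    (hsq : ∀ i, 1 ≤ i → i ≤ p - 1 → τ i * τ i = 1)
    (hcomm : ∀ i j, 1 ≤ i → j ≤ p - 1 → i + 1 < j → τ i * τ j = τ j * τ i)
    (γ : M)
    (hγ : γ = (((List.range (p - 1)).reverse).map
      (fun k => (((List.range' 1 (k + 1)).map τ).prod))).prod) :
    γ * γ = 1 := by
  rw [hγ, ← evacuation_comp_one_add]
  exact stmt0_general (fun i hi => hsq _ (by lia) (by lia))
    fun i j hij hj => hcomm _ _ (by lia) (by lia) (by lia)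
end

section
/- Let P be a finite natural partial order on {1,…,p} (i < j in P implies i < j in ℤ). Then the number of self-evacuating linear extensions of P equals the number of dual P-domino tableaux. -/
open scoped Classical

/-- The swap operator `τ` (0-based position `i`) with respect to the partial order
relation `le`: swap the entries in positions `i, i+1` if incomparable, else do nothing. -/
noncomputable def tauR {α : Type*} (le : α → α → Prop) (i : ℕ) (l : List α) : List α :=
  if h : i + 1 < l.length then
    if le (l[i]'(Nat.lt_of_succ_lt h)) (l[i + 1]'h) ∨
        le (l[i + 1]'h) (l[i]'(Nat.lt_of_succ_lt h)) then l
    else (l.set i (l[i + 1]'h)).set (i + 1) (l[i]'(Nat.lt_of_succ_lt h))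
  else l

/-- Apply a sequence of the operators `τ` (0-based indices), left to right. -/
noncomputable def applyTauR {α : Type*} (le : α → α → Prop) (is : List ℕ) (l : List α) :
    List α := is.foldl (fun acc i => tauR le i acc) l

/-- Indices (0-based) of the evacuation operator `ε = (τ₁⋯τ_{p-1})(τ₁⋯τ_{p-2})⋯τ₁`. -/
def evacIdxR (p : ℕ) : List ℕ :=
  (((List.range (p - 1)).reverse).map (fun k => List.range (k + 1))).flatten

/-- `l` is a linear extension (as a word) of the poset `(Fin p, le)`. -/
def IsLinExtR {p : ℕ} (le : Fin p → Fin p → Prop) (l : List (Fin p)) : Prop :=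
  l.Nodup ∧ (∀ x : Fin p, x ∈ l) ∧
    ∀ i j : Fin l.length, le (l.get i) (l.get j) → l.get i ≠ l.get j → (i : ℕ) < (j : ℕ)

/-- `s` is an order ideal of the poset `(Fin p, le)`. -/
def IsIdealR {p : ℕ} (le : Fin p → Fin p → Prop) (s : Finset (Fin p)) : Prop :=
  ∀ x y : Fin p, le x y → y ∈ s → x ∈ s

/-- `s` is a two-element chain of the poset `(Fin p, le)`. -/
def IsTwoChainR {p : ℕ} (le : Fin p → Fin p → Prop) (s : Finset (Fin p)) : Prop :=
  ∃ a b : Fin p, a ≠ b ∧ le a b ∧ s = {a, b}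

/-- `c` is a dual `P`-domino tableau: a chain `∅ = I₀ ⊂ I₁ ⊂ ⋯ ⊂ I_r = P` of order
ideals (`r = ⌈p/2⌉`) with `I_i − I_{i-1}` a two-element chain for `2 ≤ i ≤ r`, and
`I₁` a two-element chain if `p` is even, a single element if `p` is odd. -/
def IsDualDomino {p : ℕ} (le : Fin p → Fin p → Prop)
    (c : Fin ((p + 1) / 2 + 1) → Finset (Fin p)) : Prop :=
  c 0 = ∅ ∧ c (Fin.last ((p + 1) / 2)) = Finset.univ ∧
  (∀ i, IsIdealR le (c i)) ∧
  (∀ i : Fin ((p + 1) / 2), c i.castSucc ⊆ c i.succ) ∧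
  (∀ i : Fin ((p + 1) / 2), 1 ≤ (i : ℕ) → IsTwoChainR le (c i.succ \ c i.castSucc)) ∧
  (∀ i : Fin ((p + 1) / 2), (i : ℕ) = 0 →
    if Even p then IsTwoChainR le (c i.succ \ c i.castSucc)
    else ∃ a : Fin p, c i.succ \ c i.castSucc = {a})

/-!
The swaps `τᵢ` are involutions of the set of linear extensions, and `τᵢ`, `τⱼ` commute when
`|i - j| ≥ 2`. In any group with such generators the evacuation element is conjugate to
`τ_{p-1} τ_{p-3} τ_{p-5} ⋯`, so evacuation has as many fixed points as this product. Its factors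
act on disjoint pairs of positions, hence a linear extension is fixed by the product iff it is
fixed by every factor, that is, iff each of these pairs of adjacent entries is a chain. Cutting such
a word into these pairs, with a single first entry left over when `p` is odd, gives the successive
differences of a dual domino tableau. Conversely, antisymmetry lets each two-element chain be
written as a word in only one way.
-/

section Group

variable {G : Type*} [Group G] {t : ℕ → G}

/-- The promotion element `t (n-1) * ⋯ * t 1 * t 0` of a sequence of group elements. For the swaps
this is promotion on the first `n + 1` positions, with factors in reverse of the order of the words
because permutations compose from right to left. -/
def promotionProd (t : ℕ → G) : ℕ → G
  | 0 => 1
  | n + 1 => t n * promotionProd t n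

/-- The evacuation element of a sequence of group elements, a product of promotion elements. The
index `n` is the length of the word being evacuated, so `t 0, …, t (n-2)` occur. -/
def evacuationProd (t : ℕ → G) : ℕ → G
  | 0 => 1
  | n + 1 => evacuationProd t n * promotionProd t n

/-- The product `t (n-2) * t (n-4) * ⋯` of every other generator, to which the evacuation element is
conjugate. -/
def alternatingProd (t : ℕ → G) : ℕ → G
  | 0 => 1
  | 1 => 1
  | n + 2 => t n * alternatingProd t n

theorem commute_promotionProd (hc : ∀ i j, i + 1 < j → Commute (t i) (t j)) {n j : ℕ}
    (h : n < j) : Commute (promotionProd t n) (t j) := by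
  induction n with
  | zero => exact Commute.one_left _
  | succ n ih => exact (hc n j h).mul_left (ih (by omega))

theorem commute_evacuationProd (hc : ∀ i j, i + 1 < j → Commute (t i) (t j)) {n j : ℕ}
    (h : n ≤ j) : Commute (evacuationProd t n) (t j) := by
  induction n with
  | zero => exact Commute.one_left _
  | succ n ih => exact (ih (by omega)).mul_left (commute_promotionProd hc h)

theorem semiconjBy_evacuationProd_promotionProd_inv (ht : ∀ i, t i * t i = 1)
    (hc : ∀ i j, i + 1 < j → Commute (t i) (t j)) (n : ℕ) :
    SemiconjBy (evacuationProd t n) (promotionProd t n) (promotionProd t n)⁻¹ := by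
  induction n with
  | zero => simp [evacuationProd, promotionProd]
  | succ n ih =>
    have hinv : (t n)⁻¹ = t n := inv_eq_of_mul_eq_one_left (ht n)
    have hcomm := (commute_evacuationProd hc le_rfl : Commute (evacuationProd t n) (t n)).eq
    calc evacuationProd t n * promotionProd t n * (t n * promotionProd t n)
        = (promotionProd t n)⁻¹ * (evacuationProd t n * t n) * promotionProd t n := by
          rw [ih.eq]; simp only [mul_assoc]
      _ = (t n * promotionProd t n)⁻¹ * (evacuationProd t n * promotionProd t n) := by
          rw [hcomm, mul_inv_rev, hinv]; simp only [mul_assoc]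

theorem semiconjBy_promotionProd_inv_evacuationProd (ht : ∀ i, t i * t i = 1)
    (hc : ∀ i j, i + 1 < j → Commute (t i) (t j)) (n : ℕ) :
    SemiconjBy (promotionProd t n)⁻¹ (t n * evacuationProd t n) (evacuationProd t (n + 2)) := by
  have hinv : (t n)⁻¹ = t n := inv_eq_of_mul_eq_one_left (ht n)
  have hE : evacuationProd t (n + 2) =
      (t n * promotionProd t n)⁻¹ * (evacuationProd t n * promotionProd t n) :=
    (semiconjBy_evacuationProd_promotionProd_inv ht hc (n + 1)).eq
  rw [SemiconjBy, hE, mul_inv_rev, hinv]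
  group

theorem exists_semiconjBy_alternatingProd_evacuationProd (ht : ∀ i, t i * t i = 1)
    (hc : ∀ i j, i + 1 < j → Commute (t i) (t j)) :
    ∀ n, ∃ u : G, (∀ j, n ≤ j → Commute u (t j)) ∧
      SemiconjBy u (alternatingProd t n) (evacuationProd t n)
  | 0 => ⟨1, fun _ _ => Commute.one_left _, SemiconjBy.one_left 1⟩
  | 1 => ⟨1, fun _ _ => Commute.one_left _, by
      simp [evacuationProd, promotionProd, alternatingProd]⟩
  | n + 2 => by
    obtain ⟨u, hu, hE⟩ := exists_semiconjBy_alternatingProd_evacuationProd ht hc n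
    refine ⟨(promotionProd t n)⁻¹ * u, fun j hj => ?_, ?_⟩
    · exact (commute_promotionProd hc (by omega)).inv_left.mul_left (hu j (by omega))
    · exact (semiconjBy_promotionProd_inv_evacuationProd ht hc n).mul_left
        (SemiconjBy.mul_right (hu n le_rfl) hE)

theorem isConj_alternatingProd_evacuationProd (ht : ∀ i, t i * t i = 1)
    (hc : ∀ i j, i + 1 < j → Commute (t i) (t j)) (n : ℕ) :
    IsConj (alternatingProd t n) (evacuationProd t n) := by
  obtain ⟨u, -, hu⟩ := exists_semiconjBy_alternatingProd_evacuationProd ht hc n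
  exact isConj_iff.mpr ⟨u, mul_inv_eq_of_eq_mul hu.eq⟩

end Group

theorem card_fixed_eq_of_isConj {α : Type*} {f g : Equiv.Perm α} (h : IsConj f g) :
    Nat.card {x // f x = x} = Nat.card {x // g x = x} := by
  obtain ⟨c, rfl⟩ := isConj_iff.mp h
  exact Nat.card_congr (c.subtypeEquiv fun x => by simp)

section Swap

variable {α : Type*} {le : α → α → Prop} {l : List α} {i j : ℕ}

theorem exists_eq_append_cons_cons (h : i + 1 < l.length) :
    ∃ u a b v, l = u ++ a :: b :: v ∧ u.length = i := by
  refine ⟨l.take i, l[i], l[i + 1], l.drop (i + 2), ?_, by simp; omega⟩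
  rw [← List.drop_eq_getElem_cons, ← List.drop_eq_getElem_cons, List.take_append_drop]

theorem tauR_append_cons_cons (le : α → α → Prop) (u v : List α) (a b : α) :
    tauR le u.length (u ++ a :: b :: v) =
      if le a b ∨ le b a then u ++ a :: b :: v else u ++ b :: a :: v := by
  simp [tauR]

theorem tauR_of_length_le (h : l.length ≤ i + 1) : tauR le i l = l := by
  simp [tauR, Nat.not_lt.mpr h]

theorem tauR_tauR (le : α → α → Prop) (i : ℕ) (l : List α) : tauR le i (tauR le i l) = l := by
  by_cases h : i + 1 < l.length
  · obtain ⟨u, a, b, v, rfl, rfl⟩ := exists_eq_append_cons_cons h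
    rw [tauR_append_cons_cons]
    split_ifs with hab
    · rw [tauR_append_cons_cons, if_pos hab]
    · rw [tauR_append_cons_cons, if_neg (by rwa [or_comm])]
  · rw [tauR_of_length_le (l := l) (by omega), tauR_of_length_le (by omega)]

theorem getElem?_tauR_of_ne (h : j ≠ i) (h' : j ≠ i + 1) : (tauR le i l)[j]? = l[j]? := by
  unfold tauR
  split_ifs <;> simp [h.symm, h'.symm]

theorem tauR_append_of_length_le {u v : List α} (h : u.length ≤ i) :
    tauR le i (u ++ v) = u ++ tauR le (i - u.length) v := by
  by_cases hi : i - u.length + 1 < v.length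
  · obtain ⟨w, a, b, x, rfl, hw⟩ := exists_eq_append_cons_cons hi
    obtain rfl : i = (u ++ w).length := by simp; omega
    rw [← hw, tauR_append_cons_cons, ← List.append_assoc, tauR_append_cons_cons]
    split_ifs <;> simp
  · rw [tauR_of_length_le (by simp; omega), tauR_of_length_le (by omega)]

theorem tauR_comm (le : α → α → Prop) (hij : i + 1 < j) (l : List α) :
    tauR le i (tauR le j l) = tauR le j (tauR le i l) := by
  by_cases h : i + 1 < l.length
  · obtain ⟨u, a, b, v, rfl, rfl⟩ := exists_eq_append_cons_cons h
    have tau_j (a b : α) : tauR le j (u ++ a :: b :: v) =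
        u ++ a :: b :: tauR le (j - (u.length + 2)) v := by
      simpa using tauR_append_of_length_le (le := le) (u := u ++ [a, b]) (v := v)
        (i := j) (by simp; omega)
    rw [tau_j, tauR_append_cons_cons, tauR_append_cons_cons]
    split_ifs <;> rw [tau_j]
  · rw [tauR_of_length_le (i := j) (by omega), tauR_of_length_le (by omega),
      tauR_of_length_le (by omega)]

theorem tauR_eq_self_iff_getElem?_eq : tauR le i l = l ↔ (tauR le i l)[i]? = l[i]? := by
  refine ⟨fun h => by rw [h], fun h => ?_⟩
  by_cases hi : i + 1 < l.length
  · obtain ⟨u, a, b, v, rfl, rfl⟩ := exists_eq_append_cons_cons hi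
    rw [tauR_append_cons_cons] at h ⊢
    split_ifs at h ⊢ with hab
    · rfl
    · obtain rfl : b = a := by simpa using h
      rfl
  · exact tauR_of_length_le (by omega)

theorem tauR_eq_self_iff_of_nodup (hl : l.Nodup) :
    tauR le i l = l ↔ ∀ h : i + 1 < l.length, le l[i] l[i + 1] ∨ le l[i + 1] l[i] := by
  by_cases h : i + 1 < l.length
  · obtain ⟨u, a, b, v, rfl, rfl⟩ := exists_eq_append_cons_cons h
    have hab : a ≠ b := by
      rintro rfl
      simp [List.nodup_append] at hl
    rw [tauR_append_cons_cons]
    split_ifs with hc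
    · simpa [List.getElem_append] using hc
    · simp [hc, hab.symm]
  · simp [tauR_of_length_le (Nat.not_lt.mp h), h]

end Swap

section LinearExtension

variable {p : ℕ} {le : Fin p → Fin p → Prop} {l : List (Fin p)}

theorem isLinExtR_iff :
    IsLinExtR le l ↔ l.Nodup ∧ (∀ x, x ∈ l) ∧ l.Pairwise (fun a b => ¬ le b a) := by
  refine and_congr_right fun hn => and_congr_right fun _ => ?_
  rw [List.pairwise_iff_get]
  constructor
  · intro h i j hij hle
    exact (h j i hle fun he => hij.ne' (hn.get_inj_iff.mp he)).not_gt hij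
  · intro h i j hle hne
    refine lt_of_not_ge fun hji => ?_
    rcases hji.lt_or_eq with hlt | he
    · exact h j i hlt hle
    · exact hne (congrArg l.get (Fin.ext he.symm))

theorem IsLinExtR.pairwise (h : IsLinExtR le l) : l.Pairwise (fun a b => ¬ le b a) :=
  (isLinExtR_iff.mp h).2.2

theorem IsLinExtR.length_eq (h : IsLinExtR le l) : l.length = p := by
  rw [← List.toFinset_card_of_nodup h.1,
    Finset.eq_univ_iff_forall.mpr fun x => List.mem_toFinset.mpr (h.2.1 x), Finset.card_univ,
    Fintype.card_fin]

theorem IsLinExtR.isLinExtR_tauR (hl : IsLinExtR le l) (i : ℕ) : IsLinExtR le (tauR le i l) := by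
  by_cases h : i + 1 < l.length
  · obtain ⟨u, a, b, v, rfl, rfl⟩ := exists_eq_append_cons_cons h
    rw [tauR_append_cons_cons]
    split_ifs with hab
    · exact hl
    · obtain ⟨hnodup, hmem, hpair⟩ := isLinExtR_iff.mp hl
      have hperm : (u ++ b :: a :: v).Perm (u ++ a :: b :: v) :=
        (List.Perm.swap a b v).append_left u
      refine isLinExtR_iff.mpr
        ⟨hperm.nodup_iff.mpr hnodup, fun x => hperm.mem_iff.mpr (hmem x), ?_⟩
      simp only [List.pairwise_append, List.pairwise_cons, List.mem_cons] at hpair ⊢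
      grind
  · rwa [tauR_of_length_le (by omega)]

theorem IsLinExtR.tauR_eq_self_iff (hl : IsLinExtR le l) {i : ℕ} :
    tauR le i l = l ↔ ∀ h : i + 1 < l.length, le l[i] l[i + 1] := by
  rw [tauR_eq_self_iff_of_nodup hl.1]
  refine forall_congr' fun h => or_iff_left ?_
  exact List.pairwise_iff_getElem.mp hl.pairwise i (i + 1) _ h i.lt_succ_self

/-- The linear extensions of the relation `le`, the set on which promotion and evacuation act. -/
abbrev LinExt (le : Fin p → Fin p → Prop) : Type := {l : List (Fin p) // IsLinExtR le l}

/-- The swap operator `τ` as a permutation of the linear extensions. -/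
noncomputable def tauPerm (le : Fin p → Fin p → Prop) (i : ℕ) : Equiv.Perm (LinExt le) :=
  Function.Involutive.toPerm (fun l => ⟨tauR le i l.1, l.2.isLinExtR_tauR i⟩)
    fun l => Subtype.ext (tauR_tauR le i l.1)

theorem tauPerm_mul_self (i : ℕ) : tauPerm le i * tauPerm le i = 1 :=
  Equiv.ext fun l => Subtype.ext (tauR_tauR le i l.1)

theorem commute_tauPerm (i j : ℕ) (hij : i + 1 < j) : Commute (tauPerm le i) (tauPerm le j) :=
  Equiv.ext fun l => Subtype.ext (tauR_comm le hij l.1)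

theorem applyTauR_append {α : Type*} (le : α → α → Prop) (is js : List ℕ) (l : List α) :
    applyTauR le (is ++ js) l = applyTauR le js (applyTauR le is l) :=
  List.foldl_append

theorem evacIdxR_succ (n : ℕ) : evacIdxR (n + 1) = List.range n ++ evacIdxR n := by
  cases n with
  | zero => rfl
  | succ n => simp [evacIdxR, List.range_succ]

theorem coe_promotionProd_tauPerm (n : ℕ) (l : LinExt le) :
    (promotionProd (tauPerm le) n l).1 = applyTauR le (List.range n) l.1 := by
  induction n with
  | zero => rfl
  | succ n ih =>
    rw [List.range_succ, applyTauR_append, ← ih]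
    rfl

theorem coe_evacuationProd_tauPerm (n : ℕ) (l : LinExt le) :
    (evacuationProd (tauPerm le) n l).1 = applyTauR le (evacIdxR n) l.1 := by
  induction n generalizing l with
  | zero => rfl
  | succ n ih =>
    rw [evacIdxR_succ, applyTauR_append, ← coe_promotionProd_tauPerm, ← ih]
    rfl

theorem getElem?_alternatingProd_tauPerm (l : LinExt le) {j : ℕ} :
    ∀ n, n ≤ j → (alternatingProd (tauPerm le) n l).1[j]? = l.1[j]?
  | 0, _ => rfl
  | 1, _ => rfl
  | n + 2, h =>
    (getElem?_tauR_of_ne (by omega) (by omega)).trans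
      (getElem?_alternatingProd_tauPerm l n (by omega))

theorem alternatingProd_tauPerm_add_two_eq_self_iff (l : LinExt le) (n : ℕ) :
    alternatingProd (tauPerm le) (n + 2) l = l ↔
      alternatingProd (tauPerm le) n l = l ∧ tauR le n l.1 = l.1 := by
  set m := alternatingProd (tauPerm le) n l with hm
  change tauPerm le n m = l ↔ _
  constructor
  · intro h
    have hτ : tauR le n m.1 = l.1 := congrArg Subtype.val h
    -- The earlier swaps do not touch position `n`, so `τ` at `n` must fix the entry there.
    have hfix : tauR le n m.1 = m.1 := tauR_eq_self_iff_getElem?_eq.mpr <| by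
      rw [hτ, hm, getElem?_alternatingProd_tauPerm l n le_rfl]
    have hml : m = l := Subtype.ext (hfix.symm.trans hτ)
    exact ⟨hml, by rwa [hml] at hfix⟩
  · rintro ⟨hml, hfix⟩
    rw [hml]
    exact Subtype.ext hfix

theorem alternatingProd_tauPerm_eq_self_iff (l : LinExt le) :
    ∀ n, alternatingProd (tauPerm le) n l = l ↔
      ∀ k, k + 2 ≤ n → k % 2 = n % 2 → tauR le k l.1 = l.1
  | 0 => by simp [alternatingProd]
  | 1 => by simp [alternatingProd]
  | n + 2 => by
    rw [alternatingProd_tauPerm_add_two_eq_self_iff, alternatingProd_tauPerm_eq_self_iff l n]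
    constructor
    · rintro ⟨hlt, hn⟩ k hk hpar
      obtain rfl | hkn : k = n ∨ k + 2 ≤ n := by omega
      · exact hn
      · exact hlt k hkn (by omega)
    · exact fun h => ⟨fun k hk hpar => h k (by omega) (by omega), h n le_rfl (by omega)⟩

end LinearExtension

section Block

open Finset (range)

variable {α : Type*} {le : α → α → Prop} {n : ℕ → ℕ} {l d : List α} {k : ℕ}

/-- The `k`-th block of a word that is cut from the left into blocks of sizes `n 0, n 1, …`. -/
def block (n : ℕ → ℕ) (l : List α) (k : ℕ) : List α :=
  (l.drop (∑ j ∈ range k, n j)).take (n k)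

/-- Each block of the word is a chain written in increasing order, consecutive blocks having sizes
`n 0, n 1, …`. For `n = dominoSize p` these are the linear extensions that encode dual domino
tableaux. -/
def IsBlockSorted (le : α → α → Prop) (n : ℕ → ℕ) (l : List α) : Prop :=
  ∀ k, (block n l k).Pairwise le

theorem take_sum_range_succ (n : ℕ → ℕ) (l : List α) (k : ℕ) :
    l.take (∑ j ∈ range (k + 1), n j) = l.take (∑ j ∈ range k, n j) ++ block n l k := by
  rw [Finset.sum_range_succ, List.take_add, block]

theorem sum_range_mono (n : ℕ → ℕ) : Monotone fun k => ∑ j ∈ range k, n j :=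
  (Finset.sum_mono_set n).comp Finset.range_mono

theorem block_sublist (n : ℕ → ℕ) (l : List α) (k : ℕ) : List.Sublist (block n l k) l :=
  (List.take_sublist _ _).trans (List.drop_sublist _ _)

theorem IsBlockSorted.append (hl : IsBlockSorted le n l) (hlen : l.length = ∑ j ∈ range k, n j)
    (hd : d.Pairwise le) (hdlen : d.length = n k) : IsBlockSorted le n (l ++ d) := by
  intro i
  rcases lt_trichotomy i k with hik | rfl | hki
  · have hle : (∑ j ∈ range i, n j) + n i ≤ l.length := by
      rw [← Finset.sum_range_succ, hlen]
      exact sum_range_mono n hik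
    rw [block, List.drop_append_of_le_length (by omega),
      List.take_append_of_le_length (by rw [List.length_drop]; omega)]
    exact hl i
  · rwa [block, List.drop_left' hlen, List.take_of_length_le hdlen.le]
  · have hle : (l ++ d).length ≤ ∑ j ∈ range i, n j := by
      rw [List.length_append, hlen, hdlen, ← Finset.sum_range_succ]
      exact sum_range_mono n hki
    rw [block, List.drop_eq_nil_of_le hle, List.take_nil]
    exact List.Pairwise.nil

theorem pairwise_take_two_drop_iff :
    ((l.drop k).take 2).Pairwise le ↔ ∀ h : k + 1 < l.length, le l[k] l[k + 1] := by
  by_cases h : k + 1 < l.length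
  · obtain ⟨u, a, b, v, rfl, rfl⟩ := exists_eq_append_cons_cons h
    simp
  · have hlen : ((l.drop k).take 2).length ≤ 1 := by simp; omega
    simp only [h, IsEmpty.forall_iff, iff_true]
    exact List.pairwise_iff_getElem.mpr fun i j _ _ _ => by omega

variable [DecidableEq α]

theorem toFinset_block (hl : l.Nodup) :
    (block n l k).toFinset =
      (l.take (∑ j ∈ range (k + 1), n j)).toFinset \ (l.take (∑ j ∈ range k, n j)).toFinset := by
  have hnodup := hl.sublist (l.take_sublist (∑ j ∈ range (k + 1), n j))
  rw [take_sum_range_succ] at hnodup ⊢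
  rw [List.toFinset_append, Finset.union_sdiff_cancel_left
    (List.disjoint_toFinset_iff_disjoint.mpr (List.disjoint_of_nodup_append hnodup))]

theorem eq_of_pairwise_of_toFinset_eq (hantisymm : ∀ a b, le a b → le b a → a = b)
    {l₁ l₂ : List α} (hn₁ : l₁.Nodup) (hn₂ : l₂.Nodup) (h₁ : l₁.Pairwise le)
    (h₂ : l₂.Pairwise le) (h : l₁.toFinset = l₂.toFinset) : l₁ = l₂ :=
  (List.perm_of_nodup_nodup_toFinset_eq hn₁ hn₂ h).eq_of_pairwise
    (fun a b _ _ => hantisymm a b) h₁ h₂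

theorem take_sum_range_eq_of_toFinset_eq (hantisymm : ∀ a b, le a b → le b a → a = b)
    {l₁ l₂ : List α} (hn₁ : l₁.Nodup) (hn₂ : l₂.Nodup) (h₁ : IsBlockSorted le n l₁)
    (h₂ : IsBlockSorted le n l₂) {r : ℕ}
    (h : ∀ k ≤ r, (l₁.take (∑ j ∈ range k, n j)).toFinset =
      (l₂.take (∑ j ∈ range k, n j)).toFinset) :
    l₁.take (∑ j ∈ range r, n j) = l₂.take (∑ j ∈ range r, n j) := by
  induction r with
  | zero => simp
  | succ r ih =>
    have hblock : block n l₁ r = block n l₂ r :=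
      eq_of_pairwise_of_toFinset_eq hantisymm
        (hn₁.sublist (block_sublist n l₁ r)) (hn₂.sublist (block_sublist n l₂ r)) (h₁ r) (h₂ r)
        (by rw [toFinset_block hn₁, toFinset_block hn₂, h _ le_rfl, h _ r.le_succ])
    rw [take_sum_range_succ, take_sum_range_succ, hblock, ih fun k hk => h k (by omega)]

end Block

section Flag

open Finset (range)

variable {p r : ℕ} {le : Fin p → Fin p → Prop} {n : ℕ → ℕ} {l : List (Fin p)}

/-- A chain of order ideals from `∅` to `P` whose `i`-th difference is a chain with `n i` elements,
given by an increasing word `d`. Dual domino tableaux are the case `n = dominoSize p`. -/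
structure IsChainFlag (le : Fin p → Fin p → Prop) (n : ℕ → ℕ)
    (c : Fin (r + 1) → Finset (Fin p)) : Prop where
  zero : c 0 = ∅
  last : c (Fin.last r) = Finset.univ
  isIdealR : ∀ i, IsIdealR le (c i)
  subset : ∀ i : Fin r, c i.castSucc ⊆ c i.succ
  exists_word : ∀ i : Fin r, ∃ d : List (Fin p),
    d.Nodup ∧ d.Pairwise le ∧ d.length = n i ∧ d.toFinset = c i.succ \ c i.castSucc

/-- The sets of entries of the prefixes of a word that consist of whole blocks, blocks having sizes
`n 0, n 1, …`. This is the flag encoded by the word. -/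
def prefixFlag (n : ℕ → ℕ) (r : ℕ) (l : List (Fin p)) (i : Fin (r + 1)) : Finset (Fin p) :=
  (l.take (∑ j ∈ range i, n j)).toFinset

theorem IsLinExtR.isIdealR_toFinset_take (hl : IsLinExtR le l) (k : ℕ) :
    IsIdealR le (l.take k).toFinset := by
  intro x y hle hy
  have hpair := hl.pairwise
  have hx := hl.2.1 x
  rw [← List.take_append_drop k l] at hpair hx
  rw [List.mem_toFinset] at hy ⊢
  exact (List.mem_append.mp hx).resolve_right fun hx =>
    (List.pairwise_append.mp hpair).2.2 y hy x hx hle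

theorem IsLinExtR.isChainFlag_prefixFlag (hl : IsLinExtR le l) (hs : IsBlockSorted le n l)
    (hr : ∑ j ∈ range r, n j = p) : IsChainFlag le n (prefixFlag n r l) where
  zero := by simp [prefixFlag]
  last := by
    rw [prefixFlag, Fin.val_last, hr, List.take_of_length_le hl.length_eq.le]
    exact Finset.eq_univ_iff_forall.mpr fun x => List.mem_toFinset.mpr (hl.2.1 x)
  isIdealR _ := hl.isIdealR_toFinset_take _
  subset i := by
    rw [prefixFlag, prefixFlag, Fin.val_succ, take_sum_range_succ, List.toFinset_append]
    exact Finset.subset_union_left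
  exists_word i := by
    refine ⟨block n l i, hl.1.sublist (block_sublist n l i), hs i, ?_, toFinset_block hl.1⟩
    have hle : (∑ j ∈ range i, n j) + n i ≤ p := by
      rw [← Finset.sum_range_succ, ← hr]
      exact sum_range_mono n i.2
    rw [block, List.length_take, List.length_drop, hl.length_eq]
    omega

theorem prefixFlag_injOn (hantisymm : ∀ a b, le a b → le b a → a = b)
    (hr : ∑ j ∈ range r, n j = p) :
    Set.InjOn (prefixFlag n r) {l | IsLinExtR le l ∧ IsBlockSorted le n l} := by
  rintro l₁ ⟨hl₁, hs₁⟩ l₂ ⟨hl₂, hs₂⟩ h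
  have htake := take_sum_range_eq_of_toFinset_eq hantisymm hl₁.1 hl₂.1 hs₁ hs₂ (r := r)
    fun k hk => congrFun h ⟨k, by omega⟩
  rwa [hr, List.take_of_length_le hl₁.length_eq.le,
    List.take_of_length_le hl₂.length_eq.le] at htake

theorem IsChainFlag.exists_prefix_word (hantisymm : ∀ a b, le a b → le b a → a = b)
    {c : Fin (r + 1) → Finset (Fin p)} (hc : IsChainFlag le n c) (i : Fin (r + 1)) :
    ∃ l : List (Fin p), l.Nodup ∧ l.Pairwise (fun a b => ¬ le b a) ∧ IsBlockSorted le n l ∧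
      l.length = ∑ j ∈ range i, n j ∧ ∀ j ≤ i, prefixFlag n r l j = c j := by
  induction i using Fin.induction with
  | zero => exact ⟨[], by simp [IsBlockSorted, block, prefixFlag, hc.zero]⟩
  | succ i ih =>
    obtain ⟨l, hnodup, hpair, hsorted, hlen, hflag⟩ := ih
    obtain ⟨d, hdnodup, hdpair, hdlen, hdset⟩ := hc.exists_word i
    have hset : l.toFinset = c i.castSucc := by
      rw [← hflag _ le_rfl, prefixFlag, ← hlen, List.take_length]
    have hmem {x : Fin p} : x ∈ l ↔ x ∈ c i.castSucc := by rw [← hset, List.mem_toFinset]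
    have hnew {x : Fin p} (hx : x ∈ d) : x ∉ c i.castSucc := by
      rw [← List.mem_toFinset, hdset] at hx
      exact (Finset.mem_sdiff.mp hx).2
    have hlen' : (l ++ d).length = ∑ j ∈ range i.succ, n j := by
      rw [List.length_append, hlen, hdlen, Fin.val_succ, Finset.sum_range_succ, Fin.val_castSucc]
    refine ⟨l ++ d, hnodup.append hdnodup fun x hx hxd => hnew hxd (hmem.mp hx), ?_,
      hsorted.append hlen hdpair hdlen, hlen', fun j hj => ?_⟩
    · refine List.pairwise_append.mpr ⟨hpair, ?_, fun x hx y hy hle =>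
        hnew hy (hc.isIdealR _ _ _ hle (hmem.mp hx))⟩
      exact hdpair.imp₂ (fun a b hab hne hba => hne (hantisymm a b hab hba)) hdnodup
    · rcases hj.lt_or_eq with hlt | rfl
      · have hji : j ≤ i.castSucc := Fin.le_castSucc_iff.mpr hlt
        rw [← hflag j hji, prefixFlag, List.take_append_of_le_length, prefixFlag]
        exact hlen ▸ sum_range_mono n hji
      · rw [prefixFlag, List.take_of_length_le hlen'.le, List.toFinset_append, hset, hdset,
          Finset.union_sdiff_of_subset (hc.subset i)]

theorem IsChainFlag.exists_linExt (hantisymm : ∀ a b, le a b → le b a → a = b)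
    {c : Fin (r + 1) → Finset (Fin p)} (hc : IsChainFlag le n c) :
    ∃ l, IsLinExtR le l ∧ IsBlockSorted le n l ∧ prefixFlag n r l = c := by
  obtain ⟨l, hnodup, hpair, hsorted, hlen, hflag⟩ :=
    hc.exists_prefix_word hantisymm (Fin.last r)
  have huniv : l.toFinset = Finset.univ := by
    rw [← hc.last, ← hflag _ le_rfl, prefixFlag, ← hlen, List.take_length]
  have hmem (x : Fin p) : x ∈ l := List.mem_toFinset.mp (huniv ▸ Finset.mem_univ x)
  exact ⟨l, isLinExtR_iff.mpr ⟨hnodup, hmem, hpair⟩, hsorted,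
    funext fun j => hflag j (Fin.le_last j)⟩

theorem card_isBlockSorted_eq_card_isChainFlag (hantisymm : ∀ a b, le a b → le b a → a = b)
    (hr : ∑ j ∈ range r, n j = p) :
    Nat.card {l : LinExt le // IsBlockSorted le n l.1} =
      Nat.card {c : Fin (r + 1) → Finset (Fin p) // IsChainFlag le n c} := by
  refine Nat.card_eq_of_bijective
    (fun l => ⟨prefixFlag n r l.1.1, l.1.2.isChainFlag_prefixFlag l.2 hr⟩) ⟨fun l₁ l₂ h => ?_, ?_⟩
  · exact Subtype.ext <| Subtype.ext <|
      prefixFlag_injOn hantisymm hr ⟨l₁.1.2, l₁.2⟩ ⟨l₂.1.2, l₂.2⟩ (congrArg Subtype.val h)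
  · rintro ⟨c, hc⟩
    obtain ⟨l, hl, hs, rfl⟩ := hc.exists_linExt hantisymm
    exact ⟨⟨⟨l, hl⟩, hs⟩, rfl⟩

end Flag

section Domino

open Finset (range)

variable {p : ℕ} {le : Fin p → Fin p → Prop}

/-- The number of elements of `I_{k+1} - I_k` in a dual `P`-domino tableau with `|P| = p`. -/
def dominoSize (p k : ℕ) : ℕ := if k = 0 ∧ ¬ Even p then 1 else 2

-- The subtraction truncates only for `k = 0`, where the sum is empty.
theorem sum_range_dominoSize (p k : ℕ) : ∑ j ∈ range k, dominoSize p j = 2 * k - p % 2 := by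
  induction k with
  | zero => simp
  | succ k ih =>
    rw [Finset.sum_range_succ, ih]
    simp only [dominoSize, Nat.even_iff]
    split_ifs <;> omega

theorem isBlockSorted_dominoSize_iff {α : Type*} {le : α → α → Prop} {l : List α} :
    IsBlockSorted le (dominoSize p) l ↔
      ∀ k, k % 2 = p % 2 → ∀ h : k + 1 < l.length, le l[k] l[k + 1] := by
  simp only [← pairwise_take_two_drop_iff]
  simp only [IsBlockSorted, block, sum_range_dominoSize]
  simp only [dominoSize, Nat.even_iff]
  constructor
  · intro h k hk
    have hblock := h ((k + p % 2) / 2)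
    rwa [if_neg (by omega), show 2 * ((k + p % 2) / 2) - p % 2 = k by omega] at hblock
  · intro h k
    split_ifs with hk
    · exact List.pairwise_iff_getElem.mpr fun i j _ hj _ => by
        have := hj.trans_le (List.length_take_le _ _)
        omega
    · exact h _ (by omega)

theorem alternatingProd_tauPerm_eq_self_iff_isBlockSorted (l : LinExt le) :
    alternatingProd (tauPerm le) p l = l ↔ IsBlockSorted le (dominoSize p) l.1 := by
  have hlen := l.2.length_eq
  simp only [alternatingProd_tauPerm_eq_self_iff, l.2.tauR_eq_self_iff,
    isBlockSorted_dominoSize_iff]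
  exact ⟨fun h k hpar hk => h k (by omega) hpar hk, fun h k _ hpar hk => h k hpar hk⟩

theorem isTwoChainR_iff_exists_word {s : Finset (Fin p)} :
    IsTwoChainR le s ↔ ∃ d : List (Fin p),
      d.Nodup ∧ d.Pairwise le ∧ d.length = 2 ∧ d.toFinset = s := by
  constructor
  · rintro ⟨a, b, hne, hle, rfl⟩
    exact ⟨[a, b], by simp [hne, hle]⟩
  · rintro ⟨d, hnodup, hpair, hlen, rfl⟩
    obtain ⟨a, b, rfl⟩ := List.length_eq_two.mp hlen
    exact ⟨a, b, by simpa using hnodup, by simpa using hpair, by simp⟩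

theorem exists_eq_singleton_iff_exists_word {α : Type*} [DecidableEq α] {le : α → α → Prop}
    {s : Finset α} :
    (∃ a, s = {a}) ↔ ∃ d : List α, d.Nodup ∧ d.Pairwise le ∧ d.length = 1 ∧ d.toFinset = s := by
  constructor
  · rintro ⟨a, rfl⟩
    exact ⟨[a], by simp⟩
  · rintro ⟨d, -, -, hlen, rfl⟩
    obtain ⟨a, rfl⟩ := List.length_eq_one_iff.mp hlen
    exact ⟨a, by simp⟩

theorem isDualDomino_iff_isChainFlag {c : Fin ((p + 1) / 2 + 1) → Finset (Fin p)} :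
    IsDualDomino le c ↔ IsChainFlag le (dominoSize p) c := by
  have hstep (i : Fin ((p + 1) / 2)) :
      (∃ d : List (Fin p), d.Nodup ∧ d.Pairwise le ∧ d.length = dominoSize p i ∧
        d.toFinset = c i.succ \ c i.castSucc) ↔
      if (i : ℕ) = 0 ∧ ¬ Even p then ∃ a, c i.succ \ c i.castSucc = {a}
        else IsTwoChainR le (c i.succ \ c i.castSucc) := by
    rw [isTwoChainR_iff_exists_word, exists_eq_singleton_iff_exists_word (le := le), dominoSize]
    split_ifs <;> rfl
  constructor
  · rintro ⟨hzero, hlast, hideal, hsubset, hpos, hfirst⟩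
    refine ⟨hzero, hlast, hideal, hsubset, fun i => (hstep i).mpr ?_⟩
    grind
  · rintro ⟨hzero, hlast, hideal, hsubset, hword⟩
    simp only [hstep] at hword
    exact ⟨hzero, hlast, hideal, hsubset, by grind, by grind⟩

end Domino

theorem stmt8_general (p : ℕ) (le : Fin p → Fin p → Prop)
    (hantisymm : ∀ i j, le i j → le j i → i = j) :
    Nat.card {l : List (Fin p) // IsLinExtR le l ∧ applyTauR le (evacIdxR p) l = l} =
      Nat.card {c : Fin ((p + 1) / 2 + 1) → Finset (Fin p) // IsDualDomino le c} := by
  have hsum : ∑ j ∈ Finset.range ((p + 1) / 2), dominoSize p j = p := by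
    rw [sum_range_dominoSize]
    omega
  calc Nat.card {l : List (Fin p) // IsLinExtR le l ∧ applyTauR le (evacIdxR p) l = l}
      = Nat.card {l : LinExt le // evacuationProd (tauPerm le) p l = l} := by
        simp only [Subtype.ext_iff, coe_evacuationProd_tauPerm]
        exact Nat.card_congr (Equiv.subtypeSubtypeEquivSubtypeInter _ _).symm
    _ = Nat.card {l : LinExt le // alternatingProd (tauPerm le) p l = l} :=
        (card_fixed_eq_of_isConj
          (isConj_alternatingProd_evacuationProd tauPerm_mul_self commute_tauPerm p)).symm
    _ = Nat.card {l : LinExt le // IsBlockSorted le (dominoSize p) l.1} := by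
        simp only [alternatingProd_tauPerm_eq_self_iff_isBlockSorted]
    _ = Nat.card {c : Fin ((p + 1) / 2 + 1) → Finset (Fin p) // IsChainFlag le (dominoSize p) c} :=
        card_isBlockSorted_eq_card_isChainFlag hantisymm hsum
    _ = Nat.card {c : Fin ((p + 1) / 2 + 1) → Finset (Fin p) // IsDualDomino le c} := by
        simp only [isDualDomino_iff_isChainFlag]

/-- For a finite natural partial order `P` on `{1,…,p}`, the number of
self-evacuating linear extensions of `P` equals the number of dual `P`-domino tableaux. -/
theorem stmt8 (p : ℕ) (le : Fin p → Fin p → Prop)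
    (hrefl : ∀ i, le i i) (hantisymm : ∀ i j, le i j → le j i → i = j)
    (htrans : ∀ i j k, le i j → le j k → le i k)
    (hnat : ∀ i j : Fin p, le i j → i ≤ j) :
    Nat.card {l : List (Fin p) // IsLinExtR le l ∧ applyTauR le (evacIdxR p) l = l} =
      Nat.card {c : Fin ((p + 1) / 2 + 1) → Finset (Fin p) // IsDualDomino le c} :=
  stmt8_general p le hantisymm
end
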